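/- arXiv:2211.10074 — 5 statements merged into one kernel-verified Lean document; each statement's English description precedes it below -/
import Mathlib

section
/- Let a > 0 be a real number that is not an integer, and let F : ℂ → ℂ be any analytic continuation of the fractional hypergeometric zeta function ζ_a, i.e. F is differentiable on D = ℂ \ {1, 0, -1, -2, …} and F(s) = (Γ(a+1)/Γ(s+a-1)) · ∫₀^∞ x^{s+a-2} e^{-x} / (a γ(a,x)) dx for all s with Re(s) > 1. Then F vanishes at every trivial zero: F(1 - a - n) = 0 for every natural number n ≥ 0 (note 1 - a - n ∈ D since a is not an integer). -/
/-!
Write `γ(a, x) = x ^ a φ(x)` with `φ(x) = ∫₀¹ u ^ (a - 1) e ^ (-x u) du`. The function `φ` is a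
moment generating function of a finite measure on `[0, 1]`, hence real-analytic and positive, so
`1 / (a φ)` (`recipGamma`) is real-analytic too. The zeta integral is therefore the Mellin
transform at `s - 1` of `e ^ (-x) / (a φ(x))`. Subtracting the Taylor polynomial of `1 / (a φ)` of
order `N`, each monomial `c x ^ k` contributes `c Γ(s - 1 + k)`, and the remainder is `O(x ^ N)` at
`0` and rapidly decreasing at infinity, so that its Mellin transform is holomorphic for
`re s > 1 - N` (`integral_eq`, `mellin_remainder`). By the identity theorem `F` is `Γ(a + 1) / Γ(s + a - 1)`
times a function holomorphic on the part of the domain with `re s > 1 - N`, at least on a connected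
set reaching `1 - a - n`. The reciprocal Gamma factor vanishes there.
-/

open MeasureTheory Set

/-- The lower incomplete gamma function `γ(a, x) = ∫₀ˣ t^(a-1) e^(-t) dt`. -/
noncomputable def lowerGamma (a x : ℝ) : ℝ :=
  ∫ t in Set.Ioo (0 : ℝ) x, t ^ (a - 1) * Real.exp (-t)

/-- The domain `D = ℂ \ {1, 0, -1, -2, …}` of the analytic continuation. -/
def fhzDomain : Set ℂ := {s : ℂ | ∀ n : ℕ, s ≠ 1 - (n : ℂ)}

open ProbabilityTheory Filter Topology Asymptotics

/-- The measure `u ^ (a - 1) du` on the unit interval. Its moment generating function at `-x` is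
`x ^ (-a) * γ(a, x)`. -/
noncomputable def powMeasure (a : ℝ) : Measure ℝ :=
  (volume.restrict (Ioo (0 : ℝ) 1)).withDensity fun u => ENNReal.ofReal (u ^ (a - 1))

/-- The function `1 / (a x ^ (-a) γ(a, x))`, written so that it makes sense (and is real-analytic)
on the whole real line. -/
noncomputable def recipGamma (a x : ℝ) : ℝ := (a * mgf id (powMeasure a) (-x))⁻¹

lemma isFiniteMeasure_powMeasure {a : ℝ} (ha : 0 < a) : IsFiniteMeasure (powMeasure a) := by
  refine isFiniteMeasure_withDensity_ofReal ?_
  exact ((intervalIntegral.integrableOn_Ioo_rpow_iff (s := a - 1) one_pos).2 (by linarith)).2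

lemma integrable_exp_powMeasure {a : ℝ} (ha : 0 < a) (t : ℝ) :
    Integrable (fun u => Real.exp (t * id u)) (powMeasure a) := by
  have := isFiniteMeasure_powMeasure ha
  refine integrable_exp_mul_of_mem_Icc (a := 0) (b := 1) aemeasurable_id ?_
  refine (withDensity_absolutelyContinuous _ _).ae_le ?_
  filter_upwards [ae_restrict_mem measurableSet_Ioo] with u hu
  exact Ioo_subset_Icc_self hu

lemma mgf_powMeasure (a t : ℝ) :
    mgf id (powMeasure a) t = ∫ u in Ioo (0 : ℝ) 1, u ^ (a - 1) * Real.exp (t * u) := by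
  have hm : Measurable fun u : ℝ => ENNReal.ofReal (u ^ (a - 1)) := by fun_prop
  unfold mgf powMeasure
  rw [integral_withDensity_eq_integral_toReal_smul hm (by simp)]
  refine setIntegral_congr_fun measurableSet_Ioo fun u hu => ?_
  simp [ENNReal.toReal_ofReal (Real.rpow_nonneg hu.1.le _)]

lemma powMeasure_ne_zero {a : ℝ} : powMeasure a ≠ 0 := by
  intro h
  have hm : Measurable fun u : ℝ => ENNReal.ofReal (u ^ (a - 1)) := by fun_prop
  rw [powMeasure, withDensity_eq_zero_iff hm.aemeasurable] at h
  have : ∀ᵐ _u ∂(volume.restrict (Ioo (0 : ℝ) 1)), False := by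
    filter_upwards [h, ae_restrict_mem measurableSet_Ioo] with u hu hu'
    have := Real.rpow_pos_of_pos hu'.1 (a - 1)
    simp only [Pi.zero_apply, ENNReal.ofReal_eq_zero] at hu
    linarith
  have h0 := ae_iff.1 this
  simp at h0

lemma mgf_powMeasure_pos {a : ℝ} (ha : 0 < a) (t : ℝ) : 0 < mgf id (powMeasure a) t :=
  mgf_pos' powMeasure_ne_zero (integrable_exp_powMeasure ha t)

lemma analyticAt_recipGamma {a : ℝ} (ha : 0 < a) (x : ℝ) : AnalyticAt ℝ (recipGamma a) x := by
  have h1 : AnalyticAt ℝ (mgf id (powMeasure a)) (-x) := by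
    refine analyticAt_mgf ?_
    have : integrableExpSet id (powMeasure a) = univ :=
      eq_univ_of_forall fun t => integrable_exp_powMeasure ha t
    simp [this]
  have h2 : AnalyticAt ℝ (fun y => mgf id (powMeasure a) (-y)) x :=
    h1.comp_of_eq (analyticAt_id.neg) rfl
  exact (analyticAt_const.mul h2).inv (mul_pos ha (mgf_powMeasure_pos ha _)).ne'

/-- The substitution `t = x u` in the incomplete gamma integral. -/
lemma lowerGamma_eq {a x : ℝ} (hx : 0 < x) :
    lowerGamma a x = x ^ a * mgf id (powMeasure a) (-x) := by
  have h := intervalIntegral.smul_integral_comp_mul_left (a := 0) (b := 1)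
    (fun t : ℝ => t ^ (a - 1) * Real.exp (-t)) x
  rw [mul_zero, mul_one, intervalIntegral.integral_of_le hx.le, integral_Ioc_eq_integral_Ioo,
    intervalIntegral.integral_of_le zero_le_one, integral_Ioc_eq_integral_Ioo] at h
  rw [lowerGamma, ← h, mgf_powMeasure, smul_eq_mul, ← integral_const_mul, ← integral_const_mul]
  refine setIntegral_congr_fun measurableSet_Ioo fun u hu => ?_
  have : x ^ a = x * x ^ (a - 1) := by
    rw [Real.rpow_sub_one hx.ne']
    field_simp
  rw [Real.mul_rpow hx.le hu.1.le, this, neg_mul]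
  ring

lemma recipGamma_eq {a x : ℝ} (hx : 0 < x) :
    recipGamma a x = x ^ a / (a * lowerGamma a x) := by
  have := (Real.rpow_pos_of_pos hx a).ne'
  rw [recipGamma, lowerGamma_eq hx]
  field_simp

lemma lowerGamma_pos {a x : ℝ} (ha : 0 < a) (hx : 0 < x) : 0 < lowerGamma a x := by
  rw [lowerGamma_eq hx]
  exact mul_pos (Real.rpow_pos_of_pos hx a) (mgf_powMeasure_pos ha _)

lemma lowerGamma_mono {a x y : ℝ} (ha : 0 < a) (hxy : x ≤ y) :
    lowerGamma a x ≤ lowerGamma a y := by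
  refine setIntegral_mono_set ?_ ?_ (Ioo_subset_Ioo_right hxy).eventuallyLE
  · refine ((Real.GammaIntegral_convergent ha).mono_set Ioo_subset_Ioi_self).congr_fun
      (fun t _ => mul_comm _ _) measurableSet_Ioo
  · filter_upwards [ae_restrict_mem measurableSet_Ioo] with t ht
    exact mul_nonneg (Real.rpow_nonneg ht.1.le _) (Real.exp_pos _).le

/-- Since `γ(a, x) ≥ γ(a, 1)` for `x ≥ 1`, the function `recipGamma` grows at most like `x ^ a`. -/
lemma isBigO_recipGamma_atTop {a : ℝ} (ha : 0 < a) :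
    recipGamma a =O[atTop] fun x => x ^ a := by
  refine IsBigO.of_bound (a * lowerGamma a 1)⁻¹ ?_
  filter_upwards [eventually_ge_atTop 1] with x hx
  have hx0 : 0 < x := by linarith
  have h1 := mul_pos ha (lowerGamma_pos ha one_pos)
  rw [recipGamma_eq hx0, norm_div, div_eq_inv_mul]
  refine mul_le_mul_of_nonneg_right ?_ (norm_nonneg _)
  have h2 := mul_le_mul_of_nonneg_left (lowerGamma_mono ha hx) ha.le
  rw [Real.norm_of_nonneg (h1.le.trans h2)]
  exact inv_anti₀ h1 h2

/-- The function `e ^ (-x) * recipGamma a x` minus `e ^ (-x)` times the polynomial of degree less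
than `N` with coefficients `c`. For `c` the Taylor coefficients of `recipGamma a` at `0`, its Mellin
transform is holomorphic for `-N < re s`. -/
noncomputable def remainder (a : ℝ) (c : ℕ → ℝ) (N : ℕ) (x : ℝ) : ℝ :=
  Real.exp (-x) * (recipGamma a x - ∑ k ∈ Finset.range N, c k * x ^ k)

/-- With the Taylor coefficients of `recipGamma` at `0`, the remainder is `O(x ^ N)`. The exponent
is written in the form used by the Mellin transform lemmas. -/
lemma exists_isBigO_remainder {a : ℝ} (ha : 0 < a) (N : ℕ) :
    ∃ c : ℕ → ℝ, remainder a c N =O[𝓝[>] 0] fun x => x ^ (-(-(N : ℝ))) := by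
  obtain ⟨p, hp⟩ := analyticAt_recipGamma ha 0
  have h := (hp.isBigO_sub_partialSum_pow N).mono (nhdsWithin_le_nhds (s := Ioi 0))
  refine ⟨p.coeff, ?_⟩
  have he : (fun x : ℝ => Real.exp (-x)) =O[𝓝[>] 0] fun _ => (1 : ℝ) :=
    (Continuous.tendsto (by fun_prop) (0 : ℝ)).mono_left nhdsWithin_le_nhds |>.isBigO_one ℝ
  refine ((he.mul h).congr' ?_ ?_)
  · filter_upwards with x
    simp [remainder, FormalMultilinearSeries.partialSum, mul_comm]
  · filter_upwards [self_mem_nhdsWithin] with x hx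
    simp [abs_of_pos (show 0 < x from hx)]

lemma isBigO_remainder_atTop {a : ℝ} (ha : 0 < a) (c : ℕ → ℝ) (N : ℕ) (A : ℝ) :
    remainder a c N =O[atTop] fun x => x ^ (-A) := by
  have key : ∀ (f : ℝ → ℝ) (b : ℝ), f =O[atTop] (fun x => x ^ b) →
      (fun x => Real.exp (-x) * f x) =O[atTop] fun x => x ^ (-A) := by
    intro f b hf
    have h := (isLittleO_exp_neg_mul_rpow_atTop one_pos (-A - b)).isBigO.mul hf
    refine h.congr' ?_ ?_
    · filter_upwards with x
      simp
    · filter_upwards [eventually_gt_atTop 0] with x hx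
      rw [← Real.rpow_add hx]
      simp
  have h1 := key _ a (isBigO_recipGamma_atTop ha)
  have h2 : (fun x => ∑ k ∈ Finset.range N, Real.exp (-x) * (c k * x ^ k)) =O[atTop]
      fun x : ℝ => x ^ (-A) := by
    refine IsBigO.fun_sum fun k _ => key _ k ?_
    simp only [Real.rpow_natCast]
    exact isBigO_const_mul_self _ _ _
  refine (h1.sub h2).congr_left fun x => ?_
  simp [remainder, mul_sub, Finset.mul_sum]

lemma continuous_remainder {a : ℝ} (ha : 0 < a) (c : ℕ → ℝ) (N : ℕ) :
    Continuous (remainder a c N) := by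
  have : Continuous (recipGamma a) :=
    continuous_iff_continuousAt.2 fun x => (analyticAt_recipGamma ha x).continuousAt
  unfold remainder
  fun_prop

lemma mellin_remainder {a : ℝ} (ha : 0 < a) {c : ℕ → ℝ} {N : ℕ}
    (hc : remainder a c N =O[𝓝[>] 0] fun x => x ^ (-(-(N : ℝ)))) {s : ℂ} (hs : -(N : ℝ) < s.re) :
    MellinConvergent (fun x => (remainder a c N x : ℂ)) s ∧
      DifferentiableAt ℂ (mellin fun x => (remainder a c N x : ℂ)) s := by
  have h1 : LocallyIntegrableOn (fun x => (remainder a c N x : ℂ)) (Ioi 0) :=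
    (Complex.continuous_ofReal.comp
      (continuous_remainder ha c N)).locallyIntegrable.locallyIntegrableOn _
  have h2 : (fun x => (remainder a c N x : ℂ)) =O[atTop] fun x => x ^ (-(s.re + 1)) :=
    Complex.isBigO_ofReal_left.2 (isBigO_remainder_atTop ha c N _)
  have h3 : (fun x => (remainder a c N x : ℂ)) =O[𝓝[>] 0] fun x => x ^ (-(-(N : ℝ))) :=
    Complex.isBigO_ofReal_left.2 hc
  exact ⟨mellinConvergent_of_isBigO_rpow h1 h2 (by linarith) h3 hs,
    mellin_differentiableAt_of_isBigO_rpow h1 h2 (by linarith) h3 hs⟩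

/-- On the half-plane of convergence, the zeta integral is a sum of shifted Gamma functions plus
the Mellin transform of the remainder. -/
lemma integral_eq {a : ℝ} (ha : 0 < a) {c : ℕ → ℝ} {N : ℕ}
    (hc : remainder a c N =O[𝓝[>] 0] fun x => x ^ (-(-(N : ℝ)))) {s : ℂ} (hs : 1 < s.re) :
    (∫ x in Ioi (0 : ℝ), (x : ℂ) ^ (s + (a : ℂ) - 2) * (Real.exp (-x) : ℂ) /
      ((a * lowerGamma a x : ℝ) : ℂ)) =
    mellin (fun x => (remainder a c N x : ℂ)) (s - 1) +
      ∑ k ∈ Finset.range N, (c k : ℂ) * Complex.Gamma (s - 1 + k) := by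
  have hre : ∀ k : ℕ, 0 < (s - 1 + k).re := fun k => by
    have : (0 : ℝ) ≤ k := k.cast_nonneg
    simp; linarith
  have hconv := (mellin_remainder ha hc (s := s - 1) (by
    have : (0 : ℝ) ≤ N := N.cast_nonneg
    simp; linarith)).1
  have hG : ∀ k ∈ Finset.range N, Integrable
      (fun x : ℝ => (c k : ℂ) * (↑(Real.exp (-x)) * (x : ℂ) ^ (s - 1 + k - 1)))
      (volume.restrict (Ioi 0)) := fun k _ =>
    (Complex.GammaIntegral_convergent (hre k)).const_mul _
  have hsum : ∑ k ∈ Finset.range N, (c k : ℂ) * Complex.Gamma (s - 1 + k) =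
      ∫ x in Ioi (0 : ℝ), ∑ k ∈ Finset.range N,
        (c k : ℂ) * (↑(Real.exp (-x)) * (x : ℂ) ^ (s - 1 + k - 1)) := by
    rw [integral_finsetSum _ hG]
    refine Finset.sum_congr rfl fun k _ => ?_
    rw [integral_const_mul, Complex.Gamma_eq_integral (hre k), Complex.GammaIntegral]
  rw [hsum, mellin, ← integral_add hconv (integrable_finsetSum _ hG)]
  refine setIntegral_congr_fun measurableSet_Ioi fun x hx => ?_
  have hx : 0 < x := hx
  have hx' : (x : ℂ) ≠ 0 := by exact_mod_cast hx.ne'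
  have e1 : (x : ℂ) ^ (s + (a : ℂ) - 2) = (x : ℂ) ^ (s - 1 - 1) * ((x ^ a : ℝ) : ℂ) := by
    rw [Complex.ofReal_cpow hx.le, ← Complex.cpow_add _ _ hx']
    ring_nf
  have e2 : ∀ k : ℕ, (x : ℂ) ^ (s - 1 + k - 1) = (x : ℂ) ^ (s - 1 - 1) * (x : ℂ) ^ k := fun k => by
    rw [← Complex.cpow_natCast, ← Complex.cpow_add _ _ hx']
    ring_nf
  have e3 : (recipGamma a x : ℂ) = ((x ^ a : ℝ) : ℂ) / ((a * lowerGamma a x : ℝ) : ℂ) := by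
    rw [recipGamma_eq hx, Complex.ofReal_div]
  simp only [e1, e2, smul_eq_mul]
  have e4 : (remainder a c N x : ℂ) = (Real.exp (-x) : ℂ) *
      ((recipGamma a x : ℂ) - ∑ k ∈ Finset.range N, (c k : ℂ) * (x : ℂ) ^ k) := by
    simp [remainder]
  have e5 : ∑ k ∈ Finset.range N, (c k : ℂ) * ((Real.exp (-x) : ℂ) *
      ((x : ℂ) ^ (s - 1 - 1) * (x : ℂ) ^ k)) = (x : ℂ) ^ (s - 1 - 1) * ((Real.exp (-x) : ℂ) *
      ∑ k ∈ Finset.range N, (c k : ℂ) * (x : ℂ) ^ k) := by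
    simp only [Finset.mul_sum]
    exact Finset.sum_congr rfl fun k _ => by ring
  rw [e4, e5, e3]
  ring

theorem stmt_2 (a : ℝ) (ha : 0 < a) (haint : ¬∃ m : ℤ, (m : ℝ) = a) (F : ℂ → ℂ)
    (hF : DifferentiableOn ℂ F fhzDomain)
    (hFeq : ∀ s : ℂ, 1 < s.re →
      F s = (Complex.Gamma ((a : ℂ) + 1) / Complex.Gamma (s + (a : ℂ) - 1)) *
        ∫ x in Set.Ioi (0 : ℝ),
          (x : ℂ) ^ (s + (a : ℂ) - 2) * (Real.exp (-x) : ℂ) /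
            ((a * lowerGamma a x : ℝ) : ℂ)) :
    ∀ n : ℕ, F (1 - (a : ℂ) - (n : ℂ)) = 0 := by
  intro n
  have hfloor : (⌊1 - a - n⌋ : ℝ) ≠ 1 - a - n := fun h =>
    haint ⟨1 - n - ⌊1 - a - n⌋, by push_cast; linarith⟩
  have hlt : (⌊1 - a - n⌋ : ℝ) < 1 - a - n := lt_of_le_of_ne (Int.floor_le _) hfloor
  have hlt' := Int.lt_floor_add_one (1 - a - n)
  have hm1 : (⌊1 - a - n⌋ : ℝ) < 1 := by
    have : (0 : ℝ) ≤ n := n.cast_nonneg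
    linarith
  generalize ⌊1 - a - n⌋ = m at hfloor hlt hlt' hm1
  obtain ⟨N, hN⟩ := exists_nat_ge (1 - m : ℝ)
  obtain ⟨c, hc⟩ := exists_isBigO_remainder ha N
  -- The right half-plane and the vertical strip around the target, free of poles,
  -- are joined through a quadrant of the upper half-plane.
  let R : Set ℂ := {s | 1 < s.re}
  let H : Set ℂ := {s | 0 < s.im} ∩ {s | (m : ℝ) < s.re}
  let S : Set ℂ := {s | (m : ℝ) < s.re} ∩ {s | s.re < m + 1}
  let U : Set ℂ := R ∪ H ∪ S
  have hR : IsOpen R := isOpen_lt continuous_const Complex.continuous_re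
  have hUo : IsOpen U := by
    refine (hR.union (IsOpen.inter ?_ ?_)).union (IsOpen.inter ?_ ?_)
    · exact isOpen_lt continuous_const Complex.continuous_im
    · exact isOpen_lt continuous_const Complex.continuous_re
    · exact isOpen_lt continuous_const Complex.continuous_re
    · exact isOpen_lt Complex.continuous_re continuous_const
  have hUc : IsPreconnected U := by
    have h1 : IsPreconnected R := (convex_halfSpace_re_gt 1).isPreconnected
    have h2 : IsPreconnected H :=
      ((convex_halfSpace_im_gt 0).inter (convex_halfSpace_re_gt _)).isPreconnected
    have h3 : IsPreconnected S :=
      ((convex_halfSpace_re_gt _).inter (convex_halfSpace_re_lt _)).isPreconnected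
    refine IsPreconnected.union (⟨m + 1 / 2, 1⟩ : ℂ) (Or.inr ?_) ?_
      (IsPreconnected.union (⟨2, 1⟩ : ℂ) ?_ ?_ h1 h2) h3
    · constructor <;> simp
    · constructor <;> norm_num
    · simp [R]
    · constructor
      · simp
      · show (m : ℝ) < 2
        linarith
  have hUre : ∀ s ∈ U, (m : ℝ) < s.re := by
    rintro s ((h | h) | h)
    · exact hm1.trans h
    · exact h.2
    · exact h.1
  have hUD : U ⊆ fhzDomain := by
    rintro s hs k rfl
    rcases hs with (h | h) | h
    · have : (0 : ℝ) ≤ k := k.cast_nonneg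
      simp [R] at h
      linarith
    · simp [H] at h
    · obtain ⟨h1, h2⟩ := h
      simp only [mem_ofPred_eq, Complex.sub_re, Complex.one_re, Complex.natCast_re] at h1 h2
      have h1' : m < 1 - (k : ℤ) := by exact_mod_cast h1
      have h2' : 1 - (k : ℤ) < m + 1 := by exact_mod_cast h2
      omega
  let G : ℂ → ℂ := fun s => Complex.Gamma ((a : ℂ) + 1) * (Complex.Gamma (s + (a : ℂ) - 1))⁻¹ *
    (mellin (fun x => (remainder a c N x : ℂ)) (s - 1) +
      ∑ k ∈ Finset.range N, (c k : ℂ) * Complex.Gamma (s - 1 + k))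
  have hG : DifferentiableOn ℂ G U := by
    intro s hs
    refine DifferentiableAt.differentiableWithinAt ?_
    have d1 : DifferentiableAt ℂ (fun s => (Complex.Gamma (s + (a : ℂ) - 1))⁻¹) s :=
      (Complex.differentiable_one_div_Gamma.comp
        (show Differentiable ℂ fun s : ℂ => s + (a : ℂ) - 1 by fun_prop)) s
    have d2 : DifferentiableAt ℂ
        (fun s => mellin (fun x => (remainder a c N x : ℂ)) (s - 1)) s := by
      refine DifferentiableAt.comp s (f := fun s : ℂ => s - 1) (mellin_remainder ha hc ?_).2
        (by fun_prop)
      have := hUre s hs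
      simp
      linarith
    have d3 : ∀ k ∈ Finset.range N,
        DifferentiableAt ℂ (fun s => (c k : ℂ) * Complex.Gamma (s - 1 + k)) s := by
      intro k _
      refine (DifferentiableAt.comp s (f := fun s : ℂ => s - 1 + k)
        (Complex.differentiableAt_Gamma _ fun j hj => ?_) (by fun_prop)).const_mul _
      refine hUD hs (k + j) ?_
      push_cast
      linear_combination hj
    exact (d1.const_mul _).mul (d2.add (DifferentiableAt.fun_sum d3))
  have hz₀ : (2 : ℂ) ∈ R := by simp [R]
  have hEq : EqOn F G U := by
    refine AnalyticOnNhd.eqOn_of_preconnected_of_eventuallyEq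
      ((hF.mono hUD).analyticOnNhd hUo) (hG.analyticOnNhd hUo) hUc (Or.inl (Or.inl hz₀)) ?_
    filter_upwards [hR.mem_nhds hz₀] with s hs
    rw [hFeq s hs, integral_eq ha hc hs, div_eq_mul_inv]
  have hmem : (1 - (a : ℂ) - (n : ℂ)) ∈ U := Or.inr (by
    constructor <;> simpa)
  rw [hEq hmem]
  have : (1 - (a : ℂ) - (n : ℂ)) + a - 1 = -n := by ring
  simp only [G, this, Complex.Gamma_neg_nat_eq_zero, inv_zero, mul_zero, zero_mul]
end

section
/- Let t > 0 and let h : (0, ∞) → ℝ satisfy: h(r) ≥ 0 for all r > 0; h is locally integrable on (0, ∞); h is decreasing (antitone) on (0, ∞); h is strictly decreasing on the open interval (kπ/t, (k+1)π/t) for some natural number k; and the function r ↦ h(r)·sin(t r) is integrable on (0, ∞). Then ∫₀^∞ h(r) sin(t r) dr > 0. -/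
/-!
Put `d = π / t`, `P = {r > 0 | sin (t r) > 0}` and `N = {r > 0 | sin (t r) < 0}`.  Since
`sin (t (r + d)) = -sin (t r)` and `sin (t r) ≥ 0` on `(0, d]`, we have `N = P + d`.  Translating the
integral over `N` by `d` therefore gives
`∫₀^∞ h(r) sin(t r) dr = ∫_P (h(r) - h(r + d)) sin(t r) dr`,
whose integrand is nonnegative because `h` is antitone.  If `h` is strictly antitone on
`(k d, (k + 1) d)` and `j = ⌊k / 2⌋`, then the integrand is positive on `(2 j d, (2 j + 1) d)`: for `r`
there, one of `r`, `r + d` lies in the interval of strict decrease.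
-/

open MeasureTheory Set

/-- The interval of strict decrease contains `r` (for `k` even) or `r + d` (for `k` odd); comparing
with a further point of that interval lying between `r` and `r + d` makes the drop strict. -/
lemma shift_lt_of_strictAntiOn {h : ℝ → ℝ} {d r : ℝ} {k : ℕ} (hd : 0 < d)
    (hanti : AntitoneOn h (Ioi 0))
    (hk : StrictAntiOn h (Ioo ((k : ℝ) * d) (((k : ℝ) + 1) * d)))
    (hr : r ∈ Ioo (2 * ((k / 2 : ℕ) : ℝ) * d) ((2 * ((k / 2 : ℕ) : ℝ) + 1) * d)) :
    h (r + d) < h r := by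
  obtain ⟨hr1, hr2⟩ := hr
  have hj : (0 : ℝ) ≤ 2 * ((k / 2 : ℕ) : ℝ) * d := by positivity
  rcases Nat.mod_two_eq_zero_or_one k with hmod | hmod
  · have hkj : (k : ℝ) = 2 * ((k / 2 : ℕ) : ℝ) := by
      have : k = 2 * (k / 2) := by omega
      exact_mod_cast this
    rw [hkj] at hk
    obtain ⟨s, hs1, hs2⟩ := exists_between hr2
    have h1 : h s < h r := hk ⟨hr1, hr2⟩ ⟨hr1.trans hs1, hs2⟩ hs1
    have h2 : h (r + d) ≤ h s :=
      hanti (show 0 < s by linarith) (show 0 < r + d by linarith) (by linarith)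
    exact h2.trans_lt h1
  · have hkj : (k : ℝ) = 2 * ((k / 2 : ℕ) : ℝ) + 1 := by
      have : k = 2 * (k / 2) + 1 := by omega
      exact_mod_cast this
    rw [hkj] at hk
    have hlt : (2 * ((k / 2 : ℕ) : ℝ) + 1) * d < r + d := by linarith
    obtain ⟨s, hs1, hs2⟩ := exists_between hlt
    have h1 : h (r + d) < h s := hk ⟨hs1, by linarith⟩ ⟨hlt, by linarith⟩ hs2
    have h2 : h s ≤ h r :=
      hanti (show 0 < r by linarith) (show 0 < s by linarith) (by linarith)
    exact h1.trans_le h2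

theorem stmt_3 (t : ℝ) (ht : 0 < t) (h : ℝ → ℝ)
    (hnn : ∀ r ∈ Set.Ioi (0 : ℝ), 0 ≤ h r)
    (hloc : MeasureTheory.LocallyIntegrableOn h (Set.Ioi (0 : ℝ)))
    (hanti : AntitoneOn h (Set.Ioi (0 : ℝ)))
    (hstrict : ∃ k : ℕ,
      StrictAntiOn h (Set.Ioo ((k : ℝ) * Real.pi / t) (((k : ℝ) + 1) * Real.pi / t)))
    (hint : MeasureTheory.IntegrableOn (fun r => h r * Real.sin (t * r)) (Set.Ioi (0 : ℝ))) :
    0 < ∫ r in Set.Ioi (0 : ℝ), h r * Real.sin (t * r) := by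
  obtain ⟨k, hk⟩ := hstrict
  set d : ℝ := Real.pi / t with hd_def
  have hd : 0 < d := div_pos Real.pi_pos ht
  have htd : t * d = Real.pi := mul_div_cancel₀ _ ht.ne'
  rw [mul_div_assoc, mul_div_assoc, ← hd_def] at hk
  have hsin : ∀ r, Real.sin (t * (r + d)) = -Real.sin (t * r) := fun r => by
    rw [mul_add, htd, Real.sin_add_pi]
  set f : ℝ → ℝ := fun r => h r * Real.sin (t * r) with hf
  set P : Set ℝ := {r | 0 < r ∧ 0 < Real.sin (t * r)} with hP
  set N : Set ℝ := {r | 0 < r ∧ Real.sin (t * r) < 0} with hN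
  have hcont : Measurable fun r : ℝ => Real.sin (t * r) := by fun_prop
  have hPm : MeasurableSet P :=
    measurableSet_Ioi.inter (measurableSet_lt measurable_const hcont)
  have hNm : MeasurableSet N :=
    measurableSet_Ioi.inter (measurableSet_lt hcont measurable_const)
  have hA : Integrable (P.indicator f) :=
    (integrable_indicator_iff hPm).2 (hint.mono_set fun r hr => hr.1)
  have hB : Integrable (N.indicator f) :=
    (integrable_indicator_iff hNm).2 (hint.mono_set fun r hr => hr.1)
  have hB' : Integrable fun r => N.indicator f (r + d) := hB.comp_add_right d
  have hsplit : (Ioi (0 : ℝ)).indicator f = fun r => P.indicator f r + N.indicator f r := by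
    funext r
    by_cases hr : 0 < r
    · rcases lt_trichotomy (Real.sin (t * r)) 0 with hs | hs | hs
      · simp [indicator, hP, hN, hr, hs, hs.le]
      · simp [indicator, hP, hN, hr, hs, hf]
      · simp [indicator, hP, hN, hr, hs, hs.le]
    · simp [indicator, hP, hN, hr]
  have hshift : ∀ r, r + d ∈ N ↔ r ∈ P := by
    intro r
    simp only [hP, hN, mem_setOf_eq, hsin, neg_lt_zero]
    refine ⟨fun ⟨h1, h2⟩ => ⟨?_, h2⟩, fun ⟨h1, h2⟩ => ⟨by linarith, h2⟩⟩
    by_contra! hr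
    -- here `r + d ∈ (0, d]`, where the sine is nonnegative
    have h3 : 0 ≤ Real.sin (t * (r + d)) :=
      Real.sin_nonneg_of_nonneg_of_le_pi (by positivity) (by nlinarith)
    rw [hsin] at h3
    linarith
  have hF : ∀ r, P.indicator f r + N.indicator f (r + d)
      = P.indicator (fun r => (h r - h (r + d)) * Real.sin (t * r)) r := by
    intro r
    by_cases hr : r ∈ P
    · rw [indicator_of_mem hr, indicator_of_mem hr, indicator_of_mem ((hshift r).2 hr)]
      simp only [hf, hsin]
      ring
    · rw [indicator_of_notMem hr, indicator_of_notMem hr,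
        indicator_of_notMem (mt (hshift r).1 hr), add_zero]
  have hI : ∫ r in Ioi (0 : ℝ), f r
      = ∫ r, P.indicator (fun r => (h r - h (r + d)) * Real.sin (t * r)) r := by
    rw [← integral_indicator measurableSet_Ioi, hsplit, integral_add hA hB,
      ← integral_add_right_eq_self (N.indicator f) d, ← integral_add hA hB']
    simp only [hF]
  rw [hI, integral_pos_iff_support_of_nonneg]
  · have hsub : Ioo (2 * ((k / 2 : ℕ) : ℝ) * d) ((2 * ((k / 2 : ℕ) : ℝ) + 1) * d) ⊆
        Function.support
          (P.indicator fun r => (h r - h (r + d)) * Real.sin (t * r)) := by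
      intro r hr
      have hlt := shift_lt_of_strictAntiOn hd hanti hk hr
      have hr0 : 0 < r := lt_of_le_of_lt (by positivity) hr.1
      have hs : 0 < Real.sin (t * r) := by
        rw [← Real.sin_sub_nat_mul_two_pi (t * r) (k / 2), ← htd]
        apply Real.sin_pos_of_pos_of_lt_pi
        · nlinarith [mul_lt_mul_of_pos_left hr.1 ht]
        · rw [← htd]
          nlinarith [mul_lt_mul_of_pos_left hr.2 ht]
      rw [Function.mem_support, indicator_of_mem (show r ∈ P from ⟨hr0, hs⟩)]
      exact (mul_pos (sub_pos.2 hlt) hs).ne'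
    refine lt_of_lt_of_le ?_ (measure_mono hsub)
    rw [Real.volume_Ioo, ENNReal.ofReal_pos]
    linarith
  · intro r
    refine indicator_nonneg (fun r hr => mul_nonneg (sub_nonneg.2 ?_) hr.2.le) r
    exact hanti hr.1 (show 0 < r + d by linarith [hr.1]) (by linarith)
  · exact (hA.add hB').congr (Filter.Eventually.of_forall hF)
end

section
/- Let t > 0, let k be a positive integer, and set x̃ = exp(2πk/t) (so that t · ln x̃ = 2πk and x̃ ≥ 1). Let g : [x̃, ∞) → ℝ satisfy: g(x) ≥ 0 for all x ≥ x̃; g is locally integrable on [x̃, ∞); the function x ↦ x·g(x) is decreasing (antitone) on [x̃, ∞) and strictly decreasing on the interval (exp(jπ/t), exp((j+1)π/t)) for some positive integer j with exp(jπ/t) ≥ x̃; and x ↦ g(x)·sin(t · ln x) is integrable on [x̃, ∞). Then ∫_{x̃}^∞ g(x) sin(t · ln x) dx > 0. -/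
/-!
Write `e n = exp (n π / t)`, so that `sin (t log x)` has sign `(-1) ^ n` on `[e n, e (n + 1)]`, and
let `c = e (2m+1) * g (e (2m+1))` be the value of `x * g x` at the midpoint of the `m`-th period
`[e (2m), e (2m+2)]`. Since `sin (t log x) / x` has the antiderivative `-cos (t log x) / t`, its
integral over a full period vanishes, so the integral of `g x * sin (t log x)` over a period equals
that of `(x * g x - c) * (sin (t log x) / x)`. Antitonicity of `x * g x` makes this integrand
nonnegative on both half-periods, and positive on the interior of a half-period where `x * g x` is
strictly antitone (`period_nonneg_pos`). The integral over `(x̃, ∞)` is the limit of the sums of the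
period integrals, all of which are nonnegative and one of which is positive.
-/

open MeasureTheory Set

/-- The points at which `t * log x` is a multiple of `π`. -/
noncomputable def node (t : ℝ) (n : ℕ) : ℝ := Real.exp ((n : ℝ) * Real.pi / t)

lemma node_pos (t : ℝ) (n : ℕ) : 0 < node t n := Real.exp_pos _

lemma node_strictMono {t : ℝ} (ht : 0 < t) : StrictMono (node t) := by
  intro a b hab
  unfold node
  have : (a : ℝ) < b := by exact_mod_cast hab
  have := Real.pi_pos
  gcongr

lemma mul_log_node {t : ℝ} (ht : 0 < t) (n : ℕ) : t * Real.log (node t n) = n * Real.pi := by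
  unfold node
  rw [Real.log_exp]
  field_simp

lemma tendsto_node {t : ℝ} (ht : 0 < t) : Filter.Tendsto (node t) Filter.atTop Filter.atTop := by
  unfold node
  refine Real.tendsto_exp_atTop.comp ?_
  have h := (tendsto_natCast_atTop_atTop (R := ℝ)).atTop_mul_const
    (div_pos Real.pi_pos ht)
  simpa [mul_div_assoc] using h

lemma sin_even_nonneg {t : ℝ} (ht : 0 < t) (m : ℕ) {x : ℝ}
    (hx : x ∈ Icc (node t (2 * m)) (node t (2 * m + 1))) : 0 ≤ Real.sin (t * Real.log x) := by
  have h0 := node_pos t (2 * m)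
  have h1 := mul_le_mul_of_nonneg_left (Real.log_le_log h0 hx.1) ht.le
  have h2 := mul_le_mul_of_nonneg_left (Real.log_le_log (h0.trans_le hx.1) hx.2) ht.le
  rw [mul_log_node ht] at h1 h2
  push_cast at h1 h2
  rw [← Real.sin_sub_nat_mul_two_pi _ m]
  exact Real.sin_nonneg_of_nonneg_of_le_pi (by linarith) (by linarith)

lemma sin_even_pos {t : ℝ} (ht : 0 < t) (m : ℕ) {x : ℝ}
    (hx : x ∈ Ioo (node t (2 * m)) (node t (2 * m + 1))) : 0 < Real.sin (t * Real.log x) := by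
  have h0 := node_pos t (2 * m)
  have h1 := mul_lt_mul_of_pos_left (Real.log_lt_log h0 hx.1) ht
  have h2 := mul_lt_mul_of_pos_left (Real.log_lt_log (h0.trans hx.1) hx.2) ht
  rw [mul_log_node ht] at h1 h2
  push_cast at h1 h2
  rw [← Real.sin_sub_nat_mul_two_pi _ m]
  exact Real.sin_pos_of_pos_of_lt_pi (by linarith) (by linarith)

lemma sin_odd_nonpos {t : ℝ} (ht : 0 < t) (m : ℕ) {x : ℝ}
    (hx : x ∈ Icc (node t (2 * m + 1)) (node t (2 * m + 2))) : Real.sin (t * Real.log x) ≤ 0 := by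
  have h0 := node_pos t (2 * m + 1)
  have h1 := mul_le_mul_of_nonneg_left (Real.log_le_log h0 hx.1) ht.le
  have h2 := mul_le_mul_of_nonneg_left (Real.log_le_log (h0.trans_le hx.1) hx.2) ht.le
  rw [mul_log_node ht] at h1 h2
  push_cast at h1 h2
  rw [← Real.sin_sub_nat_mul_two_pi _ (m + 1)]
  push_cast
  exact Real.sin_nonpos_of_nonpos_of_neg_pi_le (by linarith) (by linarith)

lemma sin_odd_neg {t : ℝ} (ht : 0 < t) (m : ℕ) {x : ℝ}
    (hx : x ∈ Ioo (node t (2 * m + 1)) (node t (2 * m + 2))) : Real.sin (t * Real.log x) < 0 := by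
  have h0 := node_pos t (2 * m + 1)
  have h1 := mul_lt_mul_of_pos_left (Real.log_lt_log h0 hx.1) ht
  have h2 := mul_lt_mul_of_pos_left (Real.log_lt_log (h0.trans hx.1) hx.2) ht
  rw [mul_log_node ht] at h1 h2
  push_cast at h1 h2
  rw [← Real.sin_sub_nat_mul_two_pi _ (m + 1)]
  push_cast
  exact Real.sin_neg_of_neg_of_neg_pi_lt (by linarith) (by linarith)

lemma kernel_intervalIntegrable (t : ℝ) {a b : ℝ} (ha : 0 < a) (hb : 0 < b) :
    IntervalIntegrable (fun x => Real.sin (t * Real.log x) / x) volume a b := by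
  apply ContinuousOn.intervalIntegrable
  have h : ∀ x ∈ uIcc a b, x ≠ 0 := fun x hx => ((lt_min ha hb).trans_le hx.1).ne'
  exact (Real.continuous_sin.comp_continuousOn
    (continuousOn_const.mul (continuousOn_id.log h))).div continuousOn_id h

lemma kernel_integral_period {t : ℝ} (ht : 0 < t) (m : ℕ) :
    ∫ x in (node t (2 * m))..(node t (2 * m + 2)), Real.sin (t * Real.log x) / x = 0 := by
  have ha := node_pos t (2 * m)
  have hb := node_pos t (2 * m + 2)
  rw [intervalIntegral.integral_eq_sub_of_hasDerivAt
    (f := fun x => -Real.cos (t * Real.log x) / t) _ (kernel_intervalIntegrable t ha hb)]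
  · simp only [mul_log_node ht]
    have h : ((2 * m + 2 : ℕ) : ℝ) * Real.pi = ((2 * m : ℕ) : ℝ) * Real.pi + 2 * Real.pi := by
      push_cast; ring
    rw [h, Real.cos_add_two_pi, sub_self]
  · intro x hx
    have hx0 : x ≠ 0 := ((lt_min ha hb).trans_le hx.1).ne'
    have h := ((((Real.hasDerivAt_log hx0).const_mul t).cos).neg).div_const t
    refine h.congr_deriv ?_
    field_simp

/-- On each period the integral is nonnegative, and it is positive as soon as `x * g x` is strictly
antitone on the interior of one of the two half-periods. -/
lemma period_nonneg_pos {t : ℝ} (ht : 0 < t) (m : ℕ) (g : ℝ → ℝ)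
    (hanti : AntitoneOn (fun x => x * g x) (Icc (node t (2 * m)) (node t (2 * m + 2))))
    (hint : IntervalIntegrable (fun x => g x * Real.sin (t * Real.log x)) volume
      (node t (2 * m)) (node t (2 * m + 2))) :
    (0 ≤ ∫ x in (node t (2 * m))..(node t (2 * m + 2)), g x * Real.sin (t * Real.log x)) ∧
    ((StrictAntiOn (fun x => x * g x) (Ioo (node t (2 * m)) (node t (2 * m + 1))) ∨
      StrictAntiOn (fun x => x * g x) (Ioo (node t (2 * m + 1)) (node t (2 * m + 2)))) →
    0 < ∫ x in (node t (2 * m))..(node t (2 * m + 2)), g x * Real.sin (t * Real.log x)) := by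
  have ha := node_pos t (2 * m)
  have hab : node t (2 * m) < node t (2 * m + 1) := node_strictMono ht (by omega)
  have hbd : node t (2 * m + 1) < node t (2 * m + 2) := node_strictMono ht (by omega)
  have hper := kernel_integral_period ht m
  have hker := kernel_intervalIntegrable t ha (node_pos t (2 * m + 2))
  have hse := @sin_even_nonneg t ht m
  have hsep := @sin_even_pos t ht m
  have hso := @sin_odd_nonpos t ht m
  have hsop := @sin_odd_neg t ht m
  generalize node t (2 * m) = a at *
  generalize node t (2 * m + 1) = b at *
  generalize node t (2 * m + 2) = d at *
  set F : ℝ → ℝ := fun x =>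
    g x * Real.sin (t * Real.log x) - (b * g b) * (Real.sin (t * Real.log x) / x) with hF
  have hFi : IntervalIntegrable F volume a d := hint.sub (hker.const_mul _)
  have hF1 : IntervalIntegrable F volume a b :=
    hFi.mono_set (by
      rw [uIcc_of_le hab.le, uIcc_of_le (hab.trans hbd).le]; exact Icc_subset_Icc_right hbd.le)
  have hF2 : IntervalIntegrable F volume b d :=
    hFi.mono_set (by
      rw [uIcc_of_le hbd.le, uIcc_of_le (hab.trans hbd).le]; exact Icc_subset_Icc_left hab.le)
  have hsplit : ∫ x in a..d, g x * Real.sin (t * Real.log x)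
      = (∫ x in a..b, F x) + ∫ x in b..d, F x := by
    rw [intervalIntegral.integral_add_adjacent_intervals hF1 hF2, hF,
      intervalIntegral.integral_sub hint (hker.const_mul _),
      intervalIntegral.integral_const_mul, hper]
    ring
  have hFeq : ∀ x, 0 < x → F x = (x * g x - b * g b) * Real.sin (t * Real.log x) / x := by
    intro x hx
    simp only [hF]
    field_simp
  have hb : b ∈ Icc a d := ⟨hab.le, hbd.le⟩
  have h1 : 0 ≤ ∫ x in a..b, F x := by
    refine intervalIntegral.integral_nonneg hab.le fun x hx => ?_
    have hx0 := ha.trans_le hx.1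
    have := hanti ⟨hx.1, hx.2.trans hbd.le⟩ hb hx.2
    rw [hFeq x hx0]
    exact div_nonneg (mul_nonneg (sub_nonneg.2 this) (hse hx)) hx0.le
  have h2 : 0 ≤ ∫ x in b..d, F x := by
    refine intervalIntegral.integral_nonneg hbd.le fun x hx => ?_
    have hx0 := (ha.trans hab).trans_le hx.1
    have := hanti hb ⟨hab.le.trans hx.1, hx.2⟩ hx.1
    rw [hFeq x hx0]
    exact div_nonneg (mul_nonneg_of_nonpos_of_nonpos (sub_nonpos.2 this) (hso hx)) hx0.le
  rw [hsplit]
  refine ⟨add_nonneg h1 h2, ?_⟩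
  rintro (hs | hs)
  · refine add_pos_of_pos_of_nonneg
      (intervalIntegral.intervalIntegral_pos_of_pos_on hF1 (fun x hx => ?_) hab) h2
    have hx0 := ha.trans hx.1
    -- Strictness holds only in the open half-period; an intermediate point `w` reaches `b`.
    obtain ⟨w, hxw, hwb⟩ := exists_between hx.2
    have e1 := hs hx ⟨hx.1.trans hxw, hwb⟩ hxw
    have e2 := hanti ⟨(hx.1.trans hxw).le, (hwb.trans hbd).le⟩ hb hwb.le
    rw [hFeq x hx0]
    exact div_pos (mul_pos (sub_pos.2 (e2.trans_lt e1)) (hsep hx)) hx0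
  · refine add_pos_of_nonneg_of_pos h1
      (intervalIntegral.intervalIntegral_pos_of_pos_on hF2 (fun x hx => ?_) hbd)
    have hx0 := (ha.trans hab).trans hx.1
    obtain ⟨w, hbw, hwx⟩ := exists_between hx.1
    have e1 := hs ⟨hbw, hwx.trans hx.2⟩ hx hwx
    have e2 := hanti hb ⟨(hab.trans hbw).le, (hwx.trans hx.2).le⟩ hbw.le
    rw [hFeq x hx0]
    exact div_pos (mul_pos_of_neg_of_neg (sub_neg.2 (e1.trans_le e2)) (hsop hx)) hx0

theorem stmt_5 (t : ℝ) (ht : 0 < t) (k : ℕ) (hk : 1 ≤ k) (xt : ℝ)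
    (hxt : xt = Real.exp (2 * Real.pi * (k : ℝ) / t)) (g : ℝ → ℝ)
    (hnn : ∀ x ∈ Set.Ici xt, 0 ≤ g x)
    (hloc : MeasureTheory.LocallyIntegrableOn g (Set.Ici xt))
    (hanti : AntitoneOn (fun x => x * g x) (Set.Ici xt))
    (hstrict : ∃ j : ℕ, 1 ≤ j ∧ xt ≤ Real.exp ((j : ℝ) * Real.pi / t) ∧
      StrictAntiOn (fun x => x * g x)
        (Set.Ioo (Real.exp ((j : ℝ) * Real.pi / t)) (Real.exp (((j : ℝ) + 1) * Real.pi / t))))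
    (hint : MeasureTheory.IntegrableOn (fun x => g x * Real.sin (t * Real.log x)) (Set.Ici xt)) :
    0 < ∫ x in Set.Ioi xt, g x * Real.sin (t * Real.log x) := by
  have hx : xt = node t (2 * k) := by
    rw [hxt]; unfold node; push_cast; congr 1; ring
  obtain ⟨j, -, hj, hs⟩ := hstrict
  have hjk : 2 * k ≤ j := by
    rw [hx] at hj
    exact (node_strictMono ht).le_iff_le.1 hj
  have hs' : StrictAntiOn (fun x => x * g x) (Ioo (node t j) (node t (j + 1))) := by
    unfold node; push_cast; exact hs
  subst hx
  clear hs hxt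
  have hle : ∀ m, k ≤ m → node t (2 * k) ≤ node t (2 * m) := fun m hm =>
    (node_strictMono ht).monotone (by omega)
  have hii : ∀ m, k ≤ m → IntervalIntegrable (fun x => g x * Real.sin (t * Real.log x)) volume
      (node t (2 * m)) (node t (2 * m + 2)) := fun m hm =>
    (hint.mono_set (by
      rw [uIcc_of_le ((node_strictMono ht).monotone (by omega))]
      exact fun x hx => (hle m hm).trans hx.1)).intervalIntegrable
  have hP := fun m (hm : k ≤ m) => period_nonneg_pos ht m g
    (hanti.mono fun x hx => (hle m hm).trans hx.1) (hii m hm)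
  -- The half-period number `j` lies in the period number `j / 2 = k + n`.
  obtain ⟨n, hn⟩ : ∃ n, j / 2 = k + n := ⟨j / 2 - k, by omega⟩
  have hpos := (hP (k + n) (by omega)).2 (by
    rcases Nat.even_or_odd' j with ⟨i, rfl | rfl⟩
    · left
      obtain rfl : i = k + n := by omega
      exact hs'
    · right
      obtain rfl : i = k + n := by omega
      exact hs')
  have hlim := intervalIntegral_tendsto_integral_Ioi (node t (2 * k))
    (hint.mono_set Ioi_subset_Ici_self)
    ((tendsto_node ht).comp (Filter.tendsto_atTop_mono (f := id)
      (g := fun N : ℕ => 2 * (k + N)) (fun N => by simp only [id]; omega) Filter.tendsto_id))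
  refine hpos.trans_le (ge_of_tendsto hlim ?_)
  filter_upwards [Filter.eventually_gt_atTop n] with N hN
  have hsum := intervalIntegral.sum_integral_adjacent_intervals (n := N) (μ := volume)
    (f := fun x => g x * Real.sin (t * Real.log x)) (a := fun i => node t (2 * (k + i)))
    (fun i _ => hii (k + i) (by omega))
  simp only [Function.comp, add_zero] at hsum ⊢
  rw [← hsum]
  exact Finset.single_le_sum
    (f := fun i => ∫ x in (node t (2 * (k + i)))..(node t (2 * (k + (i + 1)))),
      g x * Real.sin (t * Real.log x))
    (fun i _ => (hP (k + i) (by omega)).1) (Finset.mem_range.2 hN)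
end

section
/- Let t > 0, let k be a positive integer, set x̃ = exp(2πk/t), and let T > x̃. Let g : [x̃, T] → ℝ satisfy: g(x) ≥ 0 for all x ∈ [x̃, T]; g is integrable on [x̃, T]; the function x ↦ x·g(x) is decreasing (antitone) on [x̃, T] and strictly decreasing on an interval (exp(jπ/t), exp((j+1)π/t)) ⊆ [x̃, T] for some positive integer j. Then ∫_{x̃}^T g(x) sin(t · ln x) dx > 0. -/
open MeasureTheory Set

/-!
Put `h x = x * g x`, which is nonnegative and antitone on `[xt, T]`, and
`d x = sin (t * log x) / x`, which has the primitive `-cos (t * log x) / t`. Since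
`t * log xt = 2πk`, we have `∫_{xt}^c d = (1 - cos (t * log c)) / t ≥ 0` for every `c ≥ xt`.
The layer-cake formula `h x = ∫_{0 < s ≤ h xt} 1[s < h x] ds` and Fubini give
`∫ g x sin (t log x) dx = ∫ h d = ∫_{0 < s ≤ h xt} (∫_{x : s < h x} d x dx) ds`. As `h` is antitone,
each superlevel set `{x : s < h x}` is, up to one point, an interval `(xt, c]`, so the outer
integrand is nonnegative. If `a < b` lie in the interval on which `h` is strictly antitone, then
`h b < s < h a` forces `a ≤ c ≤ b`, hence `t * log c` lies strictly between consecutive multiples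
of `π` and the outer integrand is positive on `(h b, h a)`, a set of positive measure.
-/

/-- An initial segment of `(p, q]` agrees with `(p, c]` up to the endpoint `c`. -/
lemma exists_Ioo_subset_subset_Ioc {p q : ℝ} (hpq : p ≤ q) {A : Set ℝ} (hA : A ⊆ Ioc p q)
    (hlow : ∀ x ∈ A, ∀ y, p < y → y ≤ x → y ∈ A) :
    ∃ c ∈ Icc p q, Ioo p c ⊆ A ∧ A ⊆ Ioc p c := by
  have hbdd : BddAbove (insert p A) := ⟨q, by
    rintro x (rfl | hx)
    · exact hpq
    · exact (hA hx).2⟩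
  refine ⟨sSup (insert p A), ⟨le_csSup hbdd (mem_insert _ _), csSup_le ⟨p, mem_insert _ _⟩ ?_⟩,
    ?_, fun x hx => ⟨(hA hx).1, le_csSup hbdd (mem_insert_of_mem _ hx)⟩⟩
  · rintro x (rfl | hx)
    · exact hpq
    · exact (hA hx).2
  · rintro y ⟨hy1, hy2⟩
    obtain ⟨x, hx, hyx⟩ := exists_lt_of_lt_csSup ⟨p, mem_insert _ _⟩ hy2
    rcases hx with rfl | hx
    · exact absurd hyx (not_lt.2 hy1.le)
    · exact hlow x hx y hy1 hyx.le

lemma setIntegral_sin_log_div {t p c : ℝ} (ht : 0 < t) (hp : 0 < p) (hpc : p ≤ c) :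
    ∫ x in Ioc p c, Real.sin (t * Real.log x) / x
      = (Real.cos (t * Real.log p) - Real.cos (t * Real.log c)) / t := by
  have hpos : ∀ x ∈ uIcc p c, x ≠ 0 := by
    intro x hx
    rw [uIcc_of_le hpc] at hx
    exact (hp.trans_le hx.1).ne'
  rw [← intervalIntegral.integral_of_le hpc,
    intervalIntegral.integral_eq_sub_of_hasDerivAt
      (f := fun x => -Real.cos (t * Real.log x) / t)]
  · ring
  · intro x hx
    have h0 := hpos x hx
    have h := ((((Real.hasDerivAt_log h0).const_mul t).cos).neg).div_const t
    refine h.congr_deriv ?_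
    field_simp
  · apply ContinuousOn.intervalIntegrable
    refine ContinuousOn.div ?_ continuousOn_id hpos
    exact Real.continuous_sin.comp_continuousOn
      (continuousOn_const.mul (Real.continuousOn_log.mono fun x hx => hpos x hx))

theorem stmt_6 (t : ℝ) (ht : 0 < t) (k : ℕ) (hk : 1 ≤ k) (xt T : ℝ)
    (hxt : xt = Real.exp (2 * Real.pi * (k : ℝ) / t)) (hT : xt < T) (g : ℝ → ℝ)
    (hnn : ∀ x ∈ Set.Icc xt T, 0 ≤ g x)
    (hint : MeasureTheory.IntegrableOn g (Set.Icc xt T))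
    (hanti : AntitoneOn (fun x => x * g x) (Set.Icc xt T))
    (hstrict : ∃ j : ℕ, 1 ≤ j ∧
      Set.Ioo (Real.exp ((j : ℝ) * Real.pi / t)) (Real.exp (((j : ℝ) + 1) * Real.pi / t))
        ⊆ Set.Icc xt T ∧
      StrictAntiOn (fun x => x * g x)
        (Set.Ioo (Real.exp ((j : ℝ) * Real.pi / t)) (Real.exp (((j : ℝ) + 1) * Real.pi / t)))) :
    0 < ∫ x in Set.Ioc xt T, g x * Real.sin (t * Real.log x) := by
  obtain ⟨j, -, hsub, hst⟩ := hstrict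
  have hxt0 : 0 < xt := hxt ▸ Real.exp_pos _
  have hcos : Real.cos (t * Real.log xt) = 1 := by
    rw [hxt, Real.log_exp, mul_div_cancel₀ _ ht.ne', mul_comm (2 * Real.pi)]
    exact Real.cos_nat_mul_two_pi k
  -- Clamping the argument to `[xt, T]` makes `x * g x` globally antitone, hence measurable.
  obtain ⟨h, hh⟩ : ∃ h : ℝ → ℝ, h = fun x => max xt (min T x) * g (max xt (min T x)) := ⟨_, rfl⟩
  have hcl : ∀ x, max xt (min T x) ∈ Icc xt T := fun x =>
    ⟨le_max_left _ _, max_le hT.le (min_le_left _ _)⟩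
  have heq : ∀ x ∈ Icc xt T, h x = x * g x := by
    intro x hx
    simp only [hh, min_eq_right hx.2, max_eq_right hx.1]
  have hant : Antitone h := by
    intro x y hxy
    rw [hh]
    exact hanti (hcl x) (hcl y) (max_le_max le_rfl (min_le_min le_rfl hxy))
  have hmeas : Measurable h := hant.measurable
  have h0 : ∀ x, 0 ≤ h x := by
    intro x
    rw [hh]
    exact mul_nonneg (hxt0.le.trans (hcl x).1) (hnn _ (hcl x))
  obtain ⟨d, hd⟩ : ∃ d : ℝ → ℝ, d = fun x => Real.sin (t * Real.log x) / x := ⟨_, rfl⟩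
  have hdm : Measurable d := by rw [hd]; fun_prop
  obtain ⟨S, hS⟩ : ∃ S : Set (ℝ × ℝ), S = {p | p.2 < h p.1} := ⟨_, rfl⟩
  have hSm : MeasurableSet S := by
    rw [hS]; exact measurableSet_lt measurable_snd (hmeas.comp measurable_fst)
  obtain ⟨G, hG⟩ : ∃ G : ℝ → ℝ → ℝ,
      G = fun x s => S.indicator (fun p => d p.1) (x, s) := ⟨_, rfl⟩
  have hGint : Integrable (Function.uncurry G)
      ((volume.restrict (Ioc xt T)).prod (volume.restrict (Ioc 0 (h xt)))) := by
    have : Function.uncurry G = S.indicator (fun p => d p.1) := by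
      ext ⟨x, s⟩; simp [hG]
    rw [this]
    refine Integrable.indicator ?_ hSm
    have hdi : Integrable d (volume.restrict (Ioc xt T)) := by
      refine Measure.integrableOn_of_bounded (M := 1 / xt) measure_Ioc_lt_top.ne
        hdm.aestronglyMeasurable ?_
      refine (ae_restrict_iff' measurableSet_Ioc).2 (Filter.Eventually.of_forall ?_)
      intro x hx
      rw [hd, Real.norm_eq_abs, abs_div, abs_of_pos (hxt0.trans hx.1)]
      exact div_le_div₀ zero_le_one (Real.abs_sin_le_one _) hxt0 hx.1.le
    exact hdi.comp_fst _
  have hlayer : ∀ x ∈ Ioc xt T,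
      g x * Real.sin (t * Real.log x) = ∫ s in Ioc 0 (h xt), G x s := by
    intro x hx
    have hx0 : 0 < x := hxt0.trans hx.1
    have e1 : G x = (Iio (h x)).indicator (fun _ => d x) := by
      ext s; simp [hG, hS, indicator]
    have e2 : Ioc 0 (h xt) ∩ Iio (h x) = Ioo 0 (h x) := by
      ext s
      exact ⟨fun hs => ⟨hs.1.1, hs.2⟩, fun hs => ⟨⟨hs.1, hs.2.le.trans (hant hx.1.le)⟩, hs.2⟩⟩
    rw [e1, setIntegral_indicator measurableSet_Iio, e2, setIntegral_const,
      Real.volume_real_Ioo_of_le (h0 x), heq x ⟨hx.1.le, hx.2⟩, hd, smul_eq_mul]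
    field_simp
    ring
  rw [setIntegral_congr_fun measurableSet_Ioc hlayer, integral_integral_swap hGint]
  -- The inner integral is the value at the edge `c` of the superlevel set.
  have hinner : ∀ s, ∃ c ∈ Icc xt T,
      (∀ x ∈ Ioc xt T, s < h x → x ≤ c) ∧ (∀ x ∈ Ioc xt T, h x ≤ s → c ≤ x) ∧
      ∫ x in Ioc xt T, G x s = (1 - Real.cos (t * Real.log c)) / t := by
    intro s
    obtain ⟨c, hc, hc1, hc2⟩ := exists_Ioo_subset_subset_Ioc hT.le
      (A := Ioc xt T ∩ {x | s < h x}) inter_subset_left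
      (fun x hx y hy hyx => ⟨⟨hy, hyx.trans hx.1.2⟩, lt_of_lt_of_le hx.2 (hant hyx)⟩)
    refine ⟨c, hc, fun x hx hs => (hc2 ⟨hx, hs⟩).2, fun x hx hs => ?_, ?_⟩
    · by_contra! hlt
      exact absurd (hc1 ⟨hx.1, hlt⟩).2 (not_lt.2 hs)
    · have e1 : (fun x => G x s) = {x | s < h x}.indicator d := by
        ext x; simp [hG, hS, indicator]
      have hae : (Ioc xt T ∩ {x | s < h x} : Set ℝ) =ᵐ[volume] Ioc xt c :=
        Filter.EventuallyLE.antisymm (LE.le.eventuallyLE hc2)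
          (Ioo_ae_eq_Ioc.symm.le.trans (LE.le.eventuallyLE hc1))
      rw [e1, setIntegral_indicator (measurableSet_lt measurable_const hmeas),
        setIntegral_congr_set hae, hd, setIntegral_sin_log_div ht hxt0 hc.1, hcos]
  have hGint' : Integrable (fun s => ∫ x in Ioc xt T, G x s) (volume.restrict (Ioc 0 (h xt))) :=
    hGint.integral_prod_right
  rw [integral_pos_iff_support_of_nonneg_ae _ hGint']
  · obtain ⟨L, hL⟩ : ∃ L, L = Real.exp ((j : ℝ) * Real.pi / t) := ⟨_, rfl⟩
    obtain ⟨R, hR⟩ : ∃ R, R = Real.exp (((j : ℝ) + 1) * Real.pi / t) := ⟨_, rfl⟩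
    have hLR : L < R := by
      rw [hL, hR]
      apply Real.exp_lt_exp.2
      have := Real.pi_pos
      gcongr
      linarith
    rw [← hL, ← hR] at hsub hst
    -- The point `e`, to the left of `a`, ensures `xt < a`.
    obtain ⟨e, he1, he2⟩ := exists_between hLR
    obtain ⟨a, ha1, ha2⟩ := exists_between he2
    obtain ⟨b, hb1, hb2⟩ := exists_between ha2
    have hea := (hsub ⟨he1, he2⟩).1
    have haI : a ∈ Ioo L R := ⟨he1.trans ha1, ha2⟩
    have hbI : b ∈ Ioo L R := ⟨haI.1.trans hb1, hb2⟩
    have haI' : a ∈ Ioc xt T := ⟨hea.trans_lt ha1, (hsub haI).2⟩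
    have hbI' : b ∈ Ioc xt T := ⟨haI'.1.trans hb1, (hsub hbI).2⟩
    have hba : h b < h a := by
      rw [heq a (hsub haI), heq b (hsub hbI)]
      exact hst haI hbI hb1
    have hsupp : Ioo (h b) (h a) ⊆
        (Function.support fun s => ∫ x in Ioc xt T, G x s) ∩ Ioc 0 (h xt) := by
      rintro s ⟨hs1, hs2⟩
      refine ⟨?_, (h0 b).trans_lt hs1, hs2.le.trans (hant haI'.1.le)⟩
      obtain ⟨c, hc, hc1, hc2, hc3⟩ := hinner s
      have hac := hc1 a haI' hs2
      have hcb := hc2 b hbI' hs1.le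
      have hc0 : 0 < c := hxt0.trans_le hc.1
      have hl : (j : ℝ) * Real.pi < t * Real.log c := by
        have := (Real.lt_log_iff_exp_lt hc0).2 (hL ▸ haI.1.trans_le hac)
        rw [div_lt_iff₀ ht] at this
        linarith
      have hr : t * Real.log c < ((j : ℝ) + 1) * Real.pi := by
        have := (Real.log_lt_iff_lt_exp hc0).2 (hR ▸ hcb.trans_lt hb2)
        rw [lt_div_iff₀ ht] at this
        linarith
      rw [Function.mem_support, hc3]
      refine div_ne_zero (fun h1 => ?_) ht.ne'
      obtain ⟨n, hn⟩ := (Real.cos_eq_one_iff _).1 (sub_eq_zero.1 h1).symm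
      rw [← hn] at hl hr
      have hl' : (j : ℝ) < 2 * n := by
        by_contra! hcon
        nlinarith [Real.pi_pos]
      have hr' : (2 * n : ℝ) < j + 1 := by
        by_contra! hcon
        nlinarith [Real.pi_pos]
      have hl'' : (j : ℤ) < 2 * n := by exact_mod_cast hl'
      have hr'' : 2 * n < (j : ℤ) + 1 := by exact_mod_cast hr'
      omega
    refine lt_of_lt_of_le ?_ ((measure_mono hsupp).trans (Measure.le_restrict_apply _ _))
    rw [Real.volume_Ioo]
    exact ENNReal.ofReal_pos.2 (sub_pos.2 hba)
  · refine Filter.Eventually.of_forall fun s => ?_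
    obtain ⟨c, -, -, -, hc⟩ := hinner s
    simp only [Pi.zero_apply, hc]
    exact div_nonneg (sub_nonneg.2 (Real.cos_le_one _)) ht.le
end

section
/- Let a > 0 be real and let F : ℂ → ℂ be any analytic continuation of the fractional hypergeometric zeta function ζ_a, i.e. F is differentiable on D = ℂ \ {1, 0, -1, -2, …} and F(s) = (Γ(a+1)/Γ(s+a-1)) · ∫₀^∞ x^{s+a-2} e^{-x} / (a γ(a,x)) dx for all s with Re(s) > 1. Then for every s with 0 < Re(s) < 1 and s ≠ 1 - a, one has F(s) = (Γ(a+1)/Γ(s+a-1)) · [ Γ(s-1) + ∫₀^∞ (1/(a γ(a,x)) − x^{-a}) · x^{s+a-2} e^{-x} dx ]. -/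
/-!
Near `x = 0` one has `a γ(a, x) = x ^ a (1 + O(x))`, so subtracting `x ^ (-a)` from `1 / (a γ(a, x))`
removes the singularity responsible for the pole of `ζ_a` at `s = 1`. Precisely, the bounds
`e ^ (-x) x ^ a ≤ a γ(a, x) ≤ x ^ a` give
`0 ≤ (1 / (a γ(a, x)) - x ^ (-a)) x ^ (a - 1) e ^ (-x) ≤ (1 - e ^ (-x)) / x ≤ 1`,
and the left side (`fhzKernel`) decays exponentially at infinity, since `γ(a, ·)` is increasing.
Hence its Mellin transform is holomorphic on `Re s > 0`.

For `Re s > 1` the subtracted term integrates to `Γ(s - 1)`, so the claimed formula holds there.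
Its right side is holomorphic on `Re s > 0` away from `s = 1` (the factor `1 / Γ` being entire),
and the identity theorem carries the formula to the strip `0 < Re s < 1`, along a connected open
set that avoids `s = 1`.
-/


open MeasureTheory Set

open Filter Topology Asymptotics

/-! ### Bounds on the incomplete gamma function -/

lemma integrableOn_lowerGamma {a : ℝ} (ha : 0 < a) (x : ℝ) :
    IntegrableOn (fun t : ℝ => t ^ (a - 1) * Real.exp (-t)) (Ioo 0 x) := by
  have h := (Real.GammaIntegral_convergent ha).mono_set (fun t (ht : t ∈ Ioo 0 x) => ht.1)
  simpa only [mul_comm] using h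

lemma lowerGamma_mono_s7 {a : ℝ} (ha : 0 < a) : Monotone (lowerGamma a) := by
  intro x y hxy
  refine setIntegral_mono_set (integrableOn_lowerGamma ha y) ?_
    (Ioo_subset_Ioo_right hxy).eventuallyLE
  filter_upwards [ae_restrict_mem measurableSet_Ioo] with t ht
  have : 0 < t := ht.1
  simp only [Pi.zero_apply]
  positivity

lemma integrableOn_rpow_Ioo {a : ℝ} (ha : 0 < a) {x : ℝ} (hx : 0 < x) :
    IntegrableOn (fun t : ℝ => t ^ (a - 1)) (Ioo 0 x) := by
  have h := intervalIntegral.intervalIntegrable_rpow' (a := 0) (b := x) (r := a - 1) (by linarith)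
  rw [intervalIntegrable_iff_integrableOn_Ioo_of_le hx.le] at h
  exact h

lemma integral_rpow_Ioo {a : ℝ} (ha : 0 < a) {x : ℝ} (hx : 0 < x) :
    ∫ t in Ioo (0 : ℝ) x, t ^ (a - 1) = x ^ a / a := by
  rw [← integral_Ioc_eq_integral_Ioo, ← intervalIntegral.integral_of_le hx.le,
    integral_rpow (Or.inl (by linarith))]
  simp [Real.zero_rpow ha.ne']

lemma mul_lowerGamma_le {a : ℝ} (ha : 0 < a) {x : ℝ} (hx : 0 < x) :
    a * lowerGamma a x ≤ x ^ a := by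
  have h : lowerGamma a x ≤ ∫ t in Ioo (0 : ℝ) x, t ^ (a - 1) := by
    refine setIntegral_mono_on (integrableOn_lowerGamma ha x) (integrableOn_rpow_Ioo ha hx)
      measurableSet_Ioo fun t ht => ?_
    have h0 : 0 < t := ht.1
    exact mul_le_of_le_one_right (by positivity) (Real.exp_le_one_iff.2 (by linarith))
  rw [integral_rpow_Ioo ha hx, le_div_iff₀ ha] at h
  linarith

lemma le_mul_lowerGamma {a : ℝ} (ha : 0 < a) {x : ℝ} (hx : 0 < x) :
    Real.exp (-x) * x ^ a ≤ a * lowerGamma a x := by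
  have h : ∫ t in Ioo (0 : ℝ) x, t ^ (a - 1) * Real.exp (-x) ≤ lowerGamma a x := by
    refine setIntegral_mono_on ((integrableOn_rpow_Ioo ha hx).mul_const _)
      (integrableOn_lowerGamma ha x) measurableSet_Ioo fun t ht => ?_
    have h0 : 0 < t := ht.1
    have h1 : t < x := ht.2
    gcongr
  rw [integral_mul_const, integral_rpow_Ioo ha hx, div_mul_eq_mul_div, div_le_iff₀ ha] at h
  linarith

/-! ### The regularised kernel and its Mellin transform -/

/-- The regularised kernel `(1 / (a γ(a, x)) - x ^ (-a)) x ^ (a - 1) e ^ (-x)`. -/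
noncomputable def fhzKernel (a x : ℝ) : ℝ :=
  (1 / (a * lowerGamma a x) - x ^ (-a)) * x ^ (a - 1) * Real.exp (-x)

lemma fhzKernel_nonneg {a : ℝ} (ha : 0 < a) {x : ℝ} (hx : 0 < x) : 0 ≤ fhzKernel a x := by
  have h1 := mul_lowerGamma_le ha hx
  have h2 := le_mul_lowerGamma ha hx
  have h3 : 0 < a * lowerGamma a x := lt_of_lt_of_le (by positivity) h2
  have h4 : x ^ (-a) ≤ 1 / (a * lowerGamma a x) := by
    rw [Real.rpow_neg hx.le, ← one_div]
    exact one_div_le_one_div_of_le h3 h1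
  unfold fhzKernel
  have := sub_nonneg.2 h4
  positivity

lemma fhzKernel_le_one {a : ℝ} (ha : 0 < a) {x : ℝ} (hx : 0 < x) : fhzKernel a x ≤ 1 := by
  have h2 := le_mul_lowerGamma ha hx
  have h4 : 1 / (a * lowerGamma a x) ≤ Real.exp x * x ^ (-a) := by
    refine (one_div_le_one_div_of_le (by positivity) h2).trans_eq ?_
    rw [Real.rpow_neg hx.le, Real.exp_neg]
    field_simp
  calc fhzKernel a x
      ≤ (Real.exp x * x ^ (-a) - x ^ (-a)) * x ^ (a - 1) * Real.exp (-x) := by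
        unfold fhzKernel; gcongr
    _ = (1 - Real.exp (-x)) * x⁻¹ := by
        have e1 : x ^ (-a) * x ^ (a - 1) = x⁻¹ := by
          rw [← Real.rpow_add hx, ← Real.rpow_neg_one]; congr 1; ring
        have e2 : Real.exp x * Real.exp (-x) = 1 := by rw [← Real.exp_add]; simp
        linear_combination (Real.exp x * Real.exp (-x) - Real.exp (-x)) * e1 + x⁻¹ * e2
    _ ≤ x * x⁻¹ := by
        gcongr
        linarith [Real.add_one_le_exp (-x)]
    _ = 1 := mul_inv_cancel₀ hx.ne'

lemma fhzKernel_le_of_one_le {a : ℝ} (ha : 0 < a) {x : ℝ} (hx : 1 ≤ x) :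
    fhzKernel a x ≤ Real.exp 1 * (x ^ (a - 1) * Real.exp (-x)) := by
  have hx0 : 0 < x := by linarith
  have h1 : Real.exp (-1) ≤ a * lowerGamma a x := by
    have := le_mul_lowerGamma ha one_pos
    rw [Real.one_rpow, mul_one] at this
    exact this.trans (mul_le_mul_of_nonneg_left (lowerGamma_mono_s7 ha hx) ha.le)
  have h2 : 1 / (a * lowerGamma a x) ≤ Real.exp 1 := by
    refine (one_div_le_one_div_of_le (by positivity) h1).trans_eq ?_
    rw [Real.exp_neg]; simp
  have h3 : 1 / (a * lowerGamma a x) - x ^ (-a) ≤ Real.exp 1 := by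
    have : 0 ≤ x ^ (-a) := by positivity
    linarith
  unfold fhzKernel
  rw [mul_assoc]
  gcongr

lemma fhzKernel_isBigO_atTop {a : ℝ} (ha : 0 < a) :
    (fun x => (fhzKernel a x : ℂ)) =O[atTop] fun x : ℝ => Real.exp (-(1 / 2) * x) := by
  have h1 : (fun x => (fhzKernel a x : ℂ)) =O[atTop]
      fun x : ℝ => x ^ (a - 1) * Real.exp (-x) := by
    refine IsBigO.of_bound (Real.exp 1) ?_
    filter_upwards [eventually_ge_atTop 1] with x hx
    have hx0 : 0 < x := by linarith
    rw [Complex.norm_real, Real.norm_of_nonneg (fhzKernel_nonneg ha hx0),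
      Real.norm_of_nonneg (by positivity)]
    exact fhzKernel_le_of_one_le ha hx
  refine h1.trans ?_
  have h2 := (isLittleO_rpow_exp_pos_mul_atTop (a - 1) (b := 1 / 2) (by norm_num)).isBigO.mul
    (isBigO_refl (fun x : ℝ => Real.exp (-x)) atTop)
  refine h2.congr_right fun x => ?_
  rw [← Real.exp_add]; congr 1; ring

lemma fhzKernel_isBigO_zero {a : ℝ} (ha : 0 < a) :
    (fun x => (fhzKernel a x : ℂ)) =O[𝓝[>] 0] fun x : ℝ => x ^ (-(0 : ℝ)) := by
  refine IsBigO.of_bound 1 ?_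
  filter_upwards [self_mem_nhdsWithin] with x hx
  rw [Complex.norm_real, Real.norm_of_nonneg (fhzKernel_nonneg ha hx)]
  simpa using fhzKernel_le_one ha hx

lemma fhzKernel_locallyIntegrableOn {a : ℝ} (ha : 0 < a) :
    LocallyIntegrableOn (fun x => (fhzKernel a x : ℂ)) (Ioi 0) := by
  refine locallyIntegrableOn_of_locallyIntegrable_restrict ?_
  refine (locallyIntegrable_const (1 : ℝ)).mono ?_ ?_
  · have hm : Measurable (lowerGamma a) := (lowerGamma_mono_s7 ha).measurable
    have : Measurable (fhzKernel a) := by unfold fhzKernel; fun_prop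
    exact (Complex.measurable_ofReal.comp this).aestronglyMeasurable
  · filter_upwards [ae_restrict_mem measurableSet_Ioi] with x hx
    rw [Complex.norm_real, Real.norm_of_nonneg (fhzKernel_nonneg ha hx)]
    simpa using fhzKernel_le_one ha hx

lemma cpow_shift {a x : ℝ} (hx : 0 < x) (s : ℂ) :
    (x : ℂ) ^ (s + (a : ℂ) - 2) = (x : ℂ) ^ (s - 1) * ((x ^ (a - 1) : ℝ) : ℂ) := by
  have hx' : (x : ℂ) ≠ 0 := by exact_mod_cast hx.ne'
  rw [Complex.ofReal_cpow hx.le, ← Complex.cpow_add _ _ hx']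
  congr 1; push_cast; ring

lemma integral_eq_mellin (a : ℝ) (s : ℂ) :
    ∫ x in Ioi (0 : ℝ), ((1 / (a * lowerGamma a x) - x ^ (-a) : ℝ) : ℂ) *
      (x : ℂ) ^ (s + (a : ℂ) - 2) * (Real.exp (-x) : ℂ)
      = mellin (fun x => (fhzKernel a x : ℂ)) s := by
  refine setIntegral_congr_fun measurableSet_Ioi fun x hx => ?_
  simp only [smul_eq_mul]
  rw [cpow_shift hx, fhzKernel]
  push_cast
  ring

lemma integral_eq_Gamma_add_mellin {a : ℝ} (ha : 0 < a) {s : ℂ} (hs : 1 < s.re) :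
    ∫ x in Ioi (0 : ℝ), (x : ℂ) ^ (s + (a : ℂ) - 2) * (Real.exp (-x) : ℂ) /
      ((a * lowerGamma a x : ℝ) : ℂ)
      = Complex.Gamma (s - 1) + mellin (fun x => (fhzKernel a x : ℂ)) s := by
  have hs' : 0 < (s - 1).re := by simpa using hs
  have hc : MellinConvergent (fun x => (fhzKernel a x : ℂ)) s :=
    mellinConvergent_of_isBigO_rpow_exp (by norm_num) (fhzKernel_locallyIntegrableOn ha)
      (fhzKernel_isBigO_atTop ha) (fhzKernel_isBigO_zero ha) (by linarith)
  rw [Complex.Gamma_eq_integral hs', Complex.GammaIntegral, mellin,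
    ← integral_add (Complex.GammaIntegral_convergent hs') hc]
  refine setIntegral_congr_fun measurableSet_Ioi fun x hx => ?_
  have hx0 : 0 < x := hx
  have hx' : (x : ℂ) ≠ 0 := by exact_mod_cast hx0.ne'
  have e : (x : ℂ) ^ (s - 1 - 1)
      = (x : ℂ) ^ (s - 1) * ((x ^ (a - 1) : ℝ) : ℂ) * ((x ^ (-a) : ℝ) : ℂ) := by
    rw [← cpow_shift hx0, Complex.ofReal_cpow hx0.le, ← Complex.cpow_add _ _ hx']
    congr 1; push_cast; ring
  simp only [smul_eq_mul]
  rw [cpow_shift hx, e, fhzKernel]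
  push_cast
  ring

/-! ### Identity theorem -/

/-- A connected open subset of `{0 < Re s} \ {1}` joining the strip `0 < Re s < 1` to the
half-plane `1 < Re s` through the quadrant `0 < Re s, 0 < Im s`. -/
def fhzRegion : Set ℂ :=
  ({s : ℂ | 0 < s.re} ∩ {s : ℂ | s.re < 1}) ∪
    (({s : ℂ | 0 < s.re} ∩ {s : ℂ | 0 < s.im}) ∪ {s : ℂ | 1 < s.re})

lemma isOpen_fhzRegion : IsOpen fhzRegion := by
  have h0 : IsOpen {s : ℂ | 0 < s.re} := isOpen_lt continuous_const Complex.continuous_re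
  exact (h0.inter (isOpen_lt Complex.continuous_re continuous_const)).union
    ((h0.inter (isOpen_lt continuous_const Complex.continuous_im)).union
      (isOpen_lt continuous_const Complex.continuous_re))

lemma isPreconnected_fhzRegion : IsPreconnected fhzRegion := by
  have hA := ((convex_halfSpace_re_gt 0).inter (convex_halfSpace_re_lt 1)).isPreconnected
  have hC := ((convex_halfSpace_re_gt 0).inter (convex_halfSpace_im_gt 0)).isPreconnected
  have hB := (convex_halfSpace_re_gt 1).isPreconnected
  have hCB := hC.union (⟨2, 1⟩ : ℂ) (by simp) (by simp) hB
  refine hA.union (⟨1 / 2, 1⟩ : ℂ) ?_ ?_ hCB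
  · constructor <;> simp only [mem_ofPred_eq] <;> norm_num
  · left; constructor <;> simp only [mem_ofPred_eq] <;> norm_num

lemma re_pos_of_mem_fhzRegion {s : ℂ} (hs : s ∈ fhzRegion) : 0 < s.re := by
  rcases hs with h | h | h
  · exact h.1
  · exact h.1
  · exact zero_lt_one.trans h

lemma fhzRegion_subset : fhzRegion ⊆ fhzDomain := by
  intro s hs n hn
  have hpos := re_pos_of_mem_fhzRegion hs
  have hre : s.re = 1 - n := by simp [hn]
  have him : s.im = 0 := by simp [hn]
  -- `0 < Re s = 1 - n` leaves only `n = 0`, that is `s = 1`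
  have hn0 : n = 0 := by
    have : (n : ℝ) < 1 := by linarith
    exact Nat.lt_one_iff.1 (by exact_mod_cast this)
  subst hn0
  simp only [Nat.cast_zero, sub_zero] at hre
  rcases hs with h | h | h
  · exact absurd h.2 (by simp [hre])
  · exact absurd h.2 (by simp [him])
  · exact absurd h (by simp [hre])

theorem stmt_7 (a : ℝ) (ha : 0 < a) (F : ℂ → ℂ)
    (hF : DifferentiableOn ℂ F fhzDomain)
    (hFeq : ∀ s : ℂ, 1 < s.re →
      F s = (Complex.Gamma ((a : ℂ) + 1) / Complex.Gamma (s + (a : ℂ) - 1)) *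
        ∫ x in Set.Ioi (0 : ℝ),
          (x : ℂ) ^ (s + (a : ℂ) - 2) * (Real.exp (-x) : ℂ) /
            ((a * lowerGamma a x : ℝ) : ℂ)) :
    ∀ s : ℂ, 0 < s.re → s.re < 1 → s ≠ 1 - (a : ℂ) →
      F s = (Complex.Gamma ((a : ℂ) + 1) / Complex.Gamma (s + (a : ℂ) - 1)) *
        (Complex.Gamma (s - 1) +
          ∫ x in Set.Ioi (0 : ℝ),
            ((1 / (a * lowerGamma a x) - x ^ (-a) : ℝ) : ℂ) *
              (x : ℂ) ^ (s + (a : ℂ) - 2) * (Real.exp (-x) : ℂ)) := by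
  intro s hs0 hs1 _
  rw [integral_eq_mellin]
  let G : ℂ → ℂ := fun s => (Complex.Gamma ((a : ℂ) + 1) / Complex.Gamma (s + (a : ℂ) - 1)) *
    (Complex.Gamma (s - 1) + mellin (fun x => (fhzKernel a x : ℂ)) s)
  have hG : DifferentiableOn ℂ G fhzRegion := by
    intro z hz
    have h1 : DifferentiableAt ℂ
        (fun s : ℂ => Complex.Gamma ((a : ℂ) + 1) / Complex.Gamma (s + (a : ℂ) - 1)) z := by
      simp only [div_eq_mul_inv]
      have h : DifferentiableAt ℂ (fun s : ℂ => s + (a : ℂ) - 1) z := by fun_prop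
      exact ((Complex.differentiable_one_div_Gamma _).comp z h).const_mul _
    have h2 : DifferentiableAt ℂ (fun s : ℂ => Complex.Gamma (s - 1)) z := by
      have h : DifferentiableAt ℂ (fun s : ℂ => s - 1) z := by fun_prop
      refine (Complex.differentiableAt_Gamma _ fun m hm => ?_).comp z h
      exact fhzRegion_subset hz m (by linear_combination hm)
    have h3 : DifferentiableAt ℂ (mellin (fun x => (fhzKernel a x : ℂ))) z :=
      mellin_differentiableAt_of_isBigO_rpow_exp (by norm_num) (fhzKernel_locallyIntegrableOn ha)
        (fhzKernel_isBigO_atTop ha) (fhzKernel_isBigO_zero ha) (re_pos_of_mem_fhzRegion hz)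
    exact (h1.mul (h2.add h3)).differentiableWithinAt
  have hEq : F =ᶠ[𝓝 (2 : ℂ)] G := by
    have hmem : {s : ℂ | 1 < s.re} ∈ 𝓝 (2 : ℂ) :=
      (isOpen_lt continuous_const Complex.continuous_re).mem_nhds (by simp)
    filter_upwards [hmem] with z hz
    rw [hFeq z hz, integral_eq_Gamma_add_mellin ha hz]
  exact ((hF.mono fhzRegion_subset).analyticOnNhd isOpen_fhzRegion).eqOn_of_preconnected_of_eventuallyEq
    (hG.analyticOnNhd isOpen_fhzRegion) isPreconnected_fhzRegion
    (Or.inr (Or.inr (by simp))) hEq (Or.inl ⟨hs0, hs1⟩)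
end
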